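/- arXiv:2404.06403 — 5 statements merged into one kernel-verified Lean document; each statement's English description precedes it below -/
import Mathlib

section
/- Let θ₁ and θ₂ be independent real Gaussian random variables with θ₁ ~ N(μ₁, σ₁²), θ₂ ~ N(μ₂, σ₂²), and σ₁² + σ₂² > 0. Set s = √(σ₁² + σ₂²) and α = (μ₁ − μ₂)/s. Then E[max(θ₁, θ₂)] = μ₁·Φ(α) + μ₂·Φ(−α) + s·φ(α), where Φ and φ are the cumulative distribution function and probability density function of the standard Gaussian N(0,1). -/
open MeasureTheory ProbabilityTheory Filter

/-- The cumulative distribution function of the standard Gaussian `N(0,1)`. -/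
noncomputable def stdGaussianCDF (x : ℝ) : ℝ :=
  ((gaussianReal 0 1) (Set.Iic x)).toReal

/-- The probability density function of the standard Gaussian `N(0,1)`. -/
noncomputable def stdGaussianPDF (x : ℝ) : ℝ :=
  Real.exp (-x ^ 2 / 2) / Real.sqrt (2 * Real.pi)

lemma aux_symm (a : ℝ) : (gaussianReal 0 1).real (Set.Ioi (-a)) = stdGaussianCDF a := by
  have h : (gaussianReal 0 1).map (fun x ↦ -x) = gaussianReal 0 1 := by
    rw [gaussianReal_map_neg]; simp
  have hna : NullSingletonClass (gaussianReal 0 1) := nullSingletonClass_gaussianReal one_ne_zero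
  unfold stdGaussianCDF
  rw [measureReal_def]
  congr 1
  conv_lhs => rw [← h]
  rw [Measure.map_apply (by fun_prop) measurableSet_Ioi]
  have : (fun x : ℝ ↦ -x) ⁻¹' Set.Ioi (-a) = Set.Iio a := by ext; simp
  rw [this]
  exact measure_congr Iio_ae_eq_Iic

lemma aux_neg (a : ℝ) : stdGaussianCDF (-a) = 1 - stdGaussianCDF a := by
  rw [← aux_symm a]
  have := probReal_compl_eq_one_sub (μ := gaussianReal 0 1) (measurableSet_Ioi (a := -a))
  rw [Set.compl_Ioi] at this
  rw [← this]
  rfl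

lemma aux_pdf (x : ℝ) : gaussianPDFReal 0 1 x = stdGaussianPDF x := by
  simp [gaussianPDFReal, stdGaussianPDF]; ring

lemma aux_int : Integrable (fun x : ℝ ↦ x) (gaussianReal 0 1) :=
  (memLp_id_gaussianReal 1).integrable (by simp)

lemma aux_first (a : ℝ) : ∫ z in Set.Ioi (-a), z ∂(gaussianReal 0 1) = stdGaussianPDF a := by
  have hi : Integrable (fun x : ℝ ↦ stdGaussianPDF x * x) := by
    have := aux_int
    rw [gaussianReal_of_var_ne_zero _ one_ne_zero, integrable_withDensity_iff_integrable_smul' (by fun_prop) (by simp [gaussianPDF])] at this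
    simpa [toReal_gaussianPDF, aux_pdf] using this
  rw [← integral_indicator measurableSet_Ioi, integral_gaussianReal_eq_integral_smul one_ne_zero]
  have e : (fun x : ℝ ↦ gaussianPDFReal 0 1 x • (Set.Ioi (-a)).indicator (fun z ↦ z) x)
      = (Set.Ioi (-a)).indicator (fun x ↦ stdGaussianPDF x * x) := by
    ext x
    by_cases hx : x ∈ Set.Ioi (-a) <;> simp [Set.indicator, hx, aux_pdf]
  rw [e, integral_indicator measurableSet_Ioi]
  have hd : ∀ x : ℝ, HasDerivAt (fun x ↦ -stdGaussianPDF x) (stdGaussianPDF x * x) x := by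
    intro x
    unfold stdGaussianPDF
    have h1 : HasDerivAt (fun x : ℝ ↦ -x ^ 2 / 2) (-x) x := by
      have h := ((hasDerivAt_pow 2 x).fun_neg).div_const 2
      exact h.congr_deriv (by norm_num; ring)
    exact (((h1.exp).div_const (Real.sqrt (2 * Real.pi))).fun_neg).congr_deriv (by ring)
  have ht : Tendsto (fun x ↦ -stdGaussianPDF x) atTop (nhds 0) := by
    have : Tendsto (fun x : ℝ ↦ -x ^ 2 / 2) atTop atBot := by
      have h := (tendsto_pow_atTop (α := ℝ) two_ne_zero).atTop_div_const (two_pos (α := ℝ))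
      have := tendsto_neg_atTop_atBot.comp h
      refine this.congr (fun x ↦ ?_)
      simp only [Function.comp]; ring
    have := ((Real.tendsto_exp_atBot.comp this).div_const (Real.sqrt (2 * Real.pi))).neg
    simpa [stdGaussianPDF] using this
  rw [integral_Ioi_of_hasDerivAt_of_tendsto' (fun x _ ↦ hd x) hi.integrableOn ht]
  simp [stdGaussianPDF]

lemma aux_max (a : ℝ) : ∫ z, max (z + a) 0 ∂(gaussianReal 0 1)
    = a * stdGaussianCDF a + stdGaussianPDF a := by
  have e : (fun z : ℝ ↦ max (z + a) 0) = (Set.Ioi (-a)).indicator (fun z ↦ z + a) := by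
    ext z
    by_cases hx : -a < z
    · rw [Set.indicator_of_mem (Set.mem_Ioi.mpr hx), max_eq_left (by linarith)]
    · rw [Set.indicator_of_notMem (fun h ↦ hx (Set.mem_Ioi.mp h)), max_eq_right (by linarith)]
  rw [e, integral_indicator measurableSet_Ioi,
    integral_add aux_int.integrableOn (integrable_const _), aux_first,
    setIntegral_const, aux_symm, smul_eq_mul]
  ring

/-- Clark's formula for the mean of the maximum of two independent Gaussians:
`E[max(θ₁, θ₂)] = μ₁·Φ(α) + μ₂·Φ(−α) + s·φ(α)` with `s = √(σ₁² + σ₂²)` and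
`α = (μ₁ − μ₂)/s`. -/
theorem stmt7
    {Ω : Type*} [MeasurableSpace Ω] (P : Measure Ω) [IsProbabilityMeasure P]
    (θ₁ θ₂ : Ω → ℝ) (hθ₁ : Measurable θ₁) (hθ₂ : Measurable θ₂)
    (μ₁ μ₂ : ℝ) (v₁ v₂ : NNReal)
    (hlaw₁ : Measure.map θ₁ P = gaussianReal μ₁ v₁)
    (hlaw₂ : Measure.map θ₂ P = gaussianReal μ₂ v₂)
    (hindep : IndepFun θ₁ θ₂ P)
    (hv : 0 < (v₁ : ℝ) + (v₂ : ℝ)) :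
    ∫ ω, max (θ₁ ω) (θ₂ ω) ∂P
      = μ₁ * stdGaussianCDF ((μ₁ - μ₂) / Real.sqrt ((v₁ : ℝ) + (v₂ : ℝ)))
        + μ₂ * stdGaussianCDF (-((μ₁ - μ₂) / Real.sqrt ((v₁ : ℝ) + (v₂ : ℝ))))
        + Real.sqrt ((v₁ : ℝ) + (v₂ : ℝ))
          * stdGaussianPDF ((μ₁ - μ₂) / Real.sqrt ((v₁ : ℝ) + (v₂ : ℝ))) := by
  set s := Real.sqrt ((v₁ : ℝ) + (v₂ : ℝ)) with hs
  have hs0 : 0 < s := Real.sqrt_pos.mpr hv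
  have hss : s ^ 2 = (v₁ : ℝ) + v₂ := Real.sq_sqrt hv.le
  set a := (μ₁ - μ₂) / s with ha
  have hsa : s * a = μ₁ - μ₂ := by rw [ha]; field_simp
  have hi₁ : Integrable θ₁ P := by
    have : Integrable id (Measure.map θ₁ P) := by
      rw [hlaw₁]; exact (memLp_id_gaussianReal 1).integrable (by simp)
    exact this.comp_measurable hθ₁
  have hi₂ : Integrable θ₂ P := by
    have : Integrable id (Measure.map θ₂ P) := by
      rw [hlaw₂]; exact (memLp_id_gaussianReal 1).integrable (by simp)
    exact this.comp_measurable hθ₂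
  have hE₂ : ∫ ω, θ₂ ω ∂P = μ₂ := by
    rw [← integral_id_gaussianReal (μ := μ₂) (v := v₂), ← hlaw₂,
      integral_map hθ₂.aemeasurable (by fun_prop)]
  have hneg : Measure.map (fun ω ↦ -θ₂ ω) P = gaussianReal (-μ₂) v₂ := by
    rw [← gaussianReal_map_neg, ← hlaw₂, Measure.map_map (by fun_prop) hθ₂]
    rfl
  have hind : IndepFun θ₁ (fun ω ↦ -θ₂ ω) P :=
    hindep.comp (φ := id) (ψ := fun x ↦ -x) measurable_id measurable_neg
  have hD := gaussianReal_add_gaussianReal_of_indepFun hind hlaw₁ hneg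
  have hstd : (gaussianReal 0 1).map (fun z ↦ s * z + s * a) = gaussianReal (μ₁ + -μ₂) (v₁ + v₂) := by
    have : (fun z : ℝ ↦ s * z + s * a) = (fun z ↦ z + s * a) ∘ (fun z ↦ s * z) := rfl
    rw [this, ← Measure.map_map (by fun_prop) (by fun_prop), gaussianReal_map_const_mul,
      gaussianReal_map_add_const]
    congr 1
    · rw [hsa]; ring
    · ext; simp [hss]
  have hmax : ∀ ω, max (θ₁ ω) (θ₂ ω) = θ₂ ω + max ((θ₁ + fun ω ↦ -θ₂ ω) ω) 0 := by
    intro ω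
    simp only [Pi.add_apply]
    rw [← max_add_add_left]
    simp
  have hiD : Integrable (fun ω ↦ max ((θ₁ + fun ω ↦ -θ₂ ω) ω) 0) P := (hi₁.add hi₂.neg).pos_part
  have hm : Measurable (θ₁ + fun ω ↦ -θ₂ ω) := hθ₁.add hθ₂.neg
  have key : ∫ ω, max ((θ₁ + fun ω ↦ -θ₂ ω) ω) 0 ∂P = s * (a * stdGaussianCDF a + stdGaussianPDF a) := by
    rw [← integral_map (f := fun x : ℝ ↦ max x 0) hm.aemeasurable (by fun_prop), hD, ← hstd,
      integral_map (by fun_prop) (by fun_prop), ← aux_max, ← integral_const_mul]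
    congr 1
    ext z
    rw [mul_max_of_nonneg _ _ hs0.le]
    ring_nf
  simp_rw [hmax]
  rw [integral_add hi₂ hiD, hE₂, key, aux_neg]
  linear_combination stdGaussianCDF a * hsa
end

section
/- Let (μ₁(t)), (μ₂(t)), (σ₁(t)), (σ₂(t)) be real sequences with σ₁(t), σ₂(t) ≥ 0 and σ₁(t)² + σ₂(t)² > 0 for every t. Define s(t) = √(σ₁(t)² + σ₂(t)²), α(t) = (μ₁(t) − μ₂(t))/s(t), the Clark mean m(t) = μ₁(t)Φ(α(t)) + μ₂(t)Φ(−α(t)) + s(t)φ(α(t)), and the Clark variance v(t) = (μ₁(t)² + σ₁(t)²)Φ(α(t)) + (μ₂(t)² + σ₂(t)²)Φ(−α(t)) + (μ₁(t) + μ₂(t))s(t)φ(α(t)) − m(t)². If μ₁(t) → a, μ₂(t) → b, σ₁(t) → 0 and σ₂(t) → 0 as t → ∞, then m(t) → max(a, b) and v(t) → 0. -/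
open MeasureTheory ProbabilityTheory Filter

/-- The Clark mean of two Gaussian moment pairs. -/
noncomputable def clarkMean (μ₁ μ₂ σ₁ σ₂ : ℝ) : ℝ :=
  μ₁ * stdGaussianCDF ((μ₁ - μ₂) / Real.sqrt (σ₁ ^ 2 + σ₂ ^ 2))
    + μ₂ * stdGaussianCDF (-((μ₁ - μ₂) / Real.sqrt (σ₁ ^ 2 + σ₂ ^ 2)))
    + Real.sqrt (σ₁ ^ 2 + σ₂ ^ 2)
      * stdGaussianPDF ((μ₁ - μ₂) / Real.sqrt (σ₁ ^ 2 + σ₂ ^ 2))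

/-- The Clark variance of two Gaussian moment pairs. -/
noncomputable def clarkVar (μ₁ μ₂ σ₁ σ₂ : ℝ) : ℝ :=
  (μ₁ ^ 2 + σ₁ ^ 2) * stdGaussianCDF ((μ₁ - μ₂) / Real.sqrt (σ₁ ^ 2 + σ₂ ^ 2))
    + (μ₂ ^ 2 + σ₂ ^ 2) * stdGaussianCDF (-((μ₁ - μ₂) / Real.sqrt (σ₁ ^ 2 + σ₂ ^ 2)))
    + (μ₁ + μ₂) * Real.sqrt (σ₁ ^ 2 + σ₂ ^ 2)
      * stdGaussianPDF ((μ₁ - μ₂) / Real.sqrt (σ₁ ^ 2 + σ₂ ^ 2))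
    - clarkMean μ₁ μ₂ σ₁ σ₂ ^ 2

lemma cdf_aux (x : ℝ) : stdGaussianCDF x = cdf (gaussianReal 0 1) x := by
  rw [cdf_eq_real]; rfl

lemma cdf_symm_aux (x : ℝ) : stdGaussianCDF x + stdGaussianCDF (-x) = 1 := by
  have h1 : (gaussianReal 0 1) (Set.Iic (-x)) = (gaussianReal 0 1) (Set.Ici x) := by
    have hm : (gaussianReal 0 1).map (fun y => -y) = gaussianReal 0 1 := by
      rw [gaussianReal_map_neg]; simp
    conv_lhs => rw [← hm]
    rw [Measure.map_apply measurable_neg measurableSet_Iic]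
    congr 1
    ext y
    simp
  have h2 : (gaussianReal 0 1) (Set.Ici x) = (gaussianReal 0 1) (Set.Iic x)ᶜ := by
    have : NullSingletonClass (gaussianReal 0 1) := nullSingletonClass_gaussianReal one_ne_zero
    rw [Set.compl_Iic]
    exact (measure_congr Ioi_ae_eq_Ici).symm
  unfold stdGaussianCDF
  rw [h1, h2]
  exact probReal_add_probReal_compl measurableSet_Iic

lemma mix_aux (x y p q : ℕ → ℝ) (a b L : ℝ) (hx : Tendsto x atTop (nhds a))
    (hy : Tendsto y atTop (nhds b)) (hp : ∀ t, |p t| ≤ 1) (hq : ∀ t, |q t| ≤ 1)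
    (hpq : ∀ t, p t + q t = 1) (ha : a = L ∨ Tendsto p atTop (nhds 0))
    (hb : b = L ∨ Tendsto q atTop (nhds 0)) :
    Tendsto (fun t => x t * p t + y t * q t) atTop (nhds L) := by
  have key : ∀ (z r : ℕ → ℝ) (c : ℝ), Tendsto z atTop (nhds c) → (∀ t, |r t| ≤ 1) →
      (c = L ∨ Tendsto r atTop (nhds 0)) →
      Tendsto (fun t => (z t - L) * r t) atTop (nhds 0) := by
    intro z r c hz hr h
    rcases h with rfl | h
    · have h0 : Tendsto (fun t => |z t - c|) atTop (nhds 0) := by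
        simpa using (hz.sub_const c).abs
      refine squeeze_zero_norm (fun t => ?_) h0
      rw [Real.norm_eq_abs, abs_mul]
      exact mul_le_of_le_one_right (abs_nonneg _) (hr t)
    · simpa using (hz.sub_const L).mul h
  have := ((key x p a hx hp ha).add (key y q b hy hq hb)).add_const L
  simp only [zero_add] at this
  refine this.congr (fun t => ?_)
  linear_combination (-L) * hpq t

lemma cdf_abs_aux (x : ℝ) : |stdGaussianCDF x| ≤ 1 := by
  rw [cdf_aux, abs_of_nonneg (cdf_nonneg _ _)]
  exact cdf_le_one _ _

lemma pdf_abs_aux (x : ℝ) : |stdGaussianPDF x| ≤ 1 := by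
  unfold stdGaussianPDF
  rw [abs_of_nonneg (by positivity)]
  have h1 : Real.exp (-x ^ 2 / 2) ≤ 1 := Real.exp_le_one_iff.2 (by nlinarith [sq_nonneg x])
  have h2 : 1 ≤ Real.sqrt (2 * Real.pi) := by
    rw [Real.one_le_sqrt]; nlinarith [Real.pi_gt_three]
  rw [div_le_one (by linarith)]
  linarith

/-- If `μ₁(t) → a`, `μ₂(t) → b` and `σ₁(t), σ₂(t) → 0` (with `σ₁(t)² + σ₂(t)² > 0` for
every `t`), then the Clark mean converges to `max a b` and the Clark variance to `0`. -/
theorem stmt9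
    (μ₁ μ₂ σ₁ σ₂ : ℕ → ℝ) (a b : ℝ)
    (hσ₁nonneg : ∀ t, 0 ≤ σ₁ t) (hσ₂nonneg : ∀ t, 0 ≤ σ₂ t)
    (hpos : ∀ t, 0 < σ₁ t ^ 2 + σ₂ t ^ 2)
    (hμ₁ : Tendsto μ₁ atTop (nhds a)) (hμ₂ : Tendsto μ₂ atTop (nhds b))
    (hσ₁ : Tendsto σ₁ atTop (nhds 0)) (hσ₂ : Tendsto σ₂ atTop (nhds 0)) :
    Tendsto (fun t => clarkMean (μ₁ t) (μ₂ t) (σ₁ t) (σ₂ t)) atTop (nhds (max a b)) ∧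
    Tendsto (fun t => clarkVar (μ₁ t) (μ₂ t) (σ₁ t) (σ₂ t)) atTop (nhds 0) := by
  set s : ℕ → ℝ := fun t => Real.sqrt (σ₁ t ^ 2 + σ₂ t ^ 2) with hs
  set α : ℕ → ℝ := fun t => (μ₁ t - μ₂ t) / s t with hα
  have hspos : ∀ t, 0 < s t := fun t => Real.sqrt_pos.2 (hpos t)
  have hs0 : Tendsto s atTop (nhds 0) := by
    have := ((hσ₁.pow 2).add (hσ₂.pow 2)).sqrt
    simpa using this
  have hsinv : Tendsto (fun t => (s t)⁻¹) atTop atTop :=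
    (tendsto_nhdsWithin_iff.2 ⟨hs0, Eventually.of_forall hspos⟩).inv_tendsto_nhdsGT_zero
  have hbot : Tendsto stdGaussianCDF atBot (nhds 0) := by
    rw [funext cdf_aux]; exact tendsto_cdf_atBot _
  have hp : a < b → Tendsto (fun t => stdGaussianCDF (α t)) atTop (nhds 0) := by
    intro h
    refine hbot.comp ?_
    exact (hμ₁.sub hμ₂).neg_mul_atTop (by linarith) hsinv
  have hq : b < a → Tendsto (fun t => stdGaussianCDF (-α t)) atTop (nhds 0) := by
    intro h
    refine hbot.comp ?_
    exact tendsto_neg_atTop_atBot.comp ((hμ₁.sub hμ₂).pos_mul_atTop (by linarith) hsinv)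
  have ha : a = max a b ∨ Tendsto (fun t => stdGaussianCDF (α t)) atTop (nhds 0) := by
    rcases lt_or_ge a b with h | h
    · exact Or.inr (hp h)
    · exact Or.inl (max_eq_left h).symm
  have hb : b = max a b ∨ Tendsto (fun t => stdGaussianCDF (-α t)) atTop (nhds 0) := by
    rcases lt_or_ge b a with h | h
    · exact Or.inr (hq h)
    · exact Or.inl (max_eq_right h).symm
  have hsφ : Tendsto (fun t => s t * stdGaussianPDF (α t)) atTop (nhds 0) := by
    refine squeeze_zero_norm (fun t => ?_) hs0
    rw [Real.norm_eq_abs, abs_mul, abs_of_pos (hspos t)]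
    exact mul_le_of_le_one_right (hspos t).le (pdf_abs_aux _)
  have hm : Tendsto (fun t => clarkMean (μ₁ t) (μ₂ t) (σ₁ t) (σ₂ t)) atTop
      (nhds (max a b)) := by
    have := (mix_aux μ₁ μ₂ _ _ a b (max a b) hμ₁ hμ₂ (fun t => cdf_abs_aux (α t))
      (fun t => cdf_abs_aux (-α t)) (fun t => cdf_symm_aux (α t)) ha hb).add hsφ
    rw [add_zero] at this
    exact this
  refine ⟨hm, ?_⟩
  have hx : Tendsto (fun t => μ₁ t ^ 2 + σ₁ t ^ 2) atTop (nhds (a ^ 2)) := by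
    simpa using (hμ₁.pow 2).add (hσ₁.pow 2)
  have hy : Tendsto (fun t => μ₂ t ^ 2 + σ₂ t ^ 2) atTop (nhds (b ^ 2)) := by
    simpa using (hμ₂.pow 2).add (hσ₂.pow 2)
  have := ((mix_aux _ _ _ _ _ _ (max a b ^ 2) hx hy (fun t => cdf_abs_aux (α t))
      (fun t => cdf_abs_aux (-α t)) (fun t => cdf_symm_aux (α t))
      (ha.imp_left (fun h => congrArg (· ^ 2) h))
      (hb.imp_left (fun h => congrArg (· ^ 2) h))).add
      ((hμ₁.add hμ₂).mul hsφ)).sub (hm.pow 2)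
  rw [mul_zero, add_zero, sub_self] at this
  refine this.congr (fun t => ?_)
  simp only [clarkVar, hα, hs]
  ring
end

section
/- Let L ≥ 1 be an integer, let p₁, …, p_L be nonnegative reals with ∑_{l=1}^L p_l = 1, let n₁, …, n_L be nonnegative integers, and for each l let α_l be a real with 1 ≤ α_l ≤ 1 + n_l. Define σ_l² = α_l(2 + n_l − α_l)/((2 + n_l)²(3 + n_l)) and σ² = ∑_{l=1}^L p_l² σ_l². Let C > 0 be such that (1/2)√(C/L) > 5. If n_l ≤ (1/2)√(C/L) for every l ∈ {1, …, L}, then σ² ≥ 1/C. -/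
/-- Posterior-variance lower bound (Lemma 5): if a probability vector `p` over `L` leaves,
Beta posterior parameters `1 ≤ α l ≤ 1 + n l` at each leaf, and sample counts
`n l ≤ (1/2)√(C/L)` with `(1/2)√(C/L) > 5` and `C > 0`, then the aggregated posterior
variance `∑ l, (p l)² · α l (2 + n l − α l)/((2 + n l)²(3 + n l))` is at least `1/C`. -/
theorem stmt13 (L : ℕ) (hL : 1 ≤ L)
    (p : Fin L → ℝ) (hp : ∀ l, 0 ≤ p l) (hpsum : ∑ l, p l = 1)
    (n : Fin L → ℕ) (α : Fin L → ℝ)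
    (hα1 : ∀ l, 1 ≤ α l) (hα2 : ∀ l, α l ≤ 1 + (n l : ℝ))
    (C : ℝ) (hC : 0 < C)
    (hC5 : 5 < (1 / 2) * Real.sqrt (C / (L : ℝ)))
    (hn : ∀ l, (n l : ℝ) ≤ (1 / 2) * Real.sqrt (C / (L : ℝ))) :
    1 / C ≤ ∑ l, (p l) ^ 2 *
      (α l * (2 + (n l : ℝ) - α l) / ((2 + (n l : ℝ)) ^ 2 * (3 + (n l : ℝ)))) := by
  have hL0 : (0 : ℝ) < L := by exact_mod_cast hL
  set s := (1 / 2) * Real.sqrt (C / (L : ℝ)) with hs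
  have hs2 : 4 * s ^ 2 = C / L := by
    rw [hs, mul_pow, Real.sq_sqrt (by positivity)]; ring
  have hkey : ∀ l, (L : ℝ) / C ≤
      α l * (2 + (n l : ℝ) - α l) / ((2 + (n l : ℝ)) ^ 2 * (3 + (n l : ℝ))) := by
    intro l
    have h1 : 1 + (n l : ℝ) ≤ α l * (2 + (n l : ℝ) - α l) := by
      nlinarith [mul_nonneg (sub_nonneg.2 (hα1 l)) (sub_nonneg.2 (hα2 l))]
    have h2 : (2 + (n l : ℝ)) ^ 2 * (3 + (n l : ℝ)) ≤ (1 + (n l : ℝ)) * (4 * s ^ 2) := by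
      have h := hn l
      rcases Nat.eq_zero_or_pos (n l) with h0 | h0
      · rw [h0]; norm_num; nlinarith
      · have h1' : (1 : ℝ) ≤ n l := by exact_mod_cast h0
        have ha : (2 + (n l : ℝ)) ^ 2 ≤ 2 * s ^ 2 := by nlinarith
        calc (2 + (n l : ℝ)) ^ 2 * (3 + (n l : ℝ)) ≤ (2 * s ^ 2) * (2 * (1 + (n l : ℝ))) := by
              apply mul_le_mul ha (by linarith) (by positivity) (by positivity)
          _ = _ := by ring
    have h3 : (L : ℝ) / C = 1 / (4 * s ^ 2) := by rw [hs2]; field_simp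
    have hspos : 0 < 4 * s ^ 2 := by rw [hs2]; positivity
    rw [h3, div_le_div_iff₀ hspos (by positivity), one_mul]
    exact h2.trans (mul_le_mul_of_nonneg_right h1 hspos.le)
  have hcs : (1 : ℝ) ≤ L * ∑ l, (p l) ^ 2 := by
    have h := sq_sum_le_card_mul_sum_sq (s := Finset.univ) (f := p)
    rw [hpsum] at h
    simpa using h
  calc 1 / C ≤ (L * ∑ l, (p l) ^ 2) / C := by gcongr
    _ = ∑ l, (p l) ^ 2 * (L / C) := by rw [← Finset.sum_mul]; ring
    _ ≤ _ := Finset.sum_le_sum fun l _ => mul_le_mul_of_nonneg_left (hkey l) (sq_nonneg _)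
end

section
/- Let θ₁ and θ₂ be independent real Gaussian random variables with θ₁ ~ N(μ₁, σ₁²) and θ₂ ~ N(μ₂, σ₂²), where μ₁, μ₂ ∈ [0, 1] and σ₂ > 0. Let C > 0 and suppose σ₂² ≥ |μ₁ − μ₂|/C. Then P[θ₂ ≥ θ₁] ≥ (1/2)·erfc(√(C/2)). -/
open MeasureTheory ProbabilityTheory

/-- The complementary error function `erfc x = (2/√π) ∫_x^∞ e^{-u²} du`. -/
noncomputable def erfc (x : ℝ) : ℝ :=
  (2 / Real.sqrt Real.pi) * ∫ u in Set.Ioi x, Real.exp (-u ^ 2)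

/-- For independent Gaussians `θ₁ ~ N(μ₁, v₁)`, `θ₂ ~ N(μ₂, σ₂²)` with `μ₁, μ₂ ∈ [0,1]`,
`σ₂ > 0`, `C > 0` and `σ₂² ≥ |μ₁ − μ₂|/C`, we have `P[θ₂ ≥ θ₁] ≥ (1/2)·erfc(√(C/2))`. -/
theorem stmt14
    {Ω : Type*} [MeasurableSpace Ω] (P : Measure Ω) [IsProbabilityMeasure P]
    (θ₁ θ₂ : Ω → ℝ) (hθ₁ : Measurable θ₁) (hθ₂ : Measurable θ₂)
    (μ₁ μ₂ : ℝ) (hμ₁0 : 0 ≤ μ₁) (hμ₁1 : μ₁ ≤ 1) (hμ₂0 : 0 ≤ μ₂) (hμ₂1 : μ₂ ≤ 1)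
    (v₁ : NNReal) (σ₂ : ℝ) (hσ₂ : 0 < σ₂)
    (hlaw₁ : Measure.map θ₁ P = gaussianReal μ₁ v₁)
    (hlaw₂ : Measure.map θ₂ P = gaussianReal μ₂ (σ₂ ^ 2).toNNReal)
    (hindep : IndepFun θ₁ θ₂ P)
    (C : ℝ) (hC : 0 < C)
    (hfloor : |μ₁ - μ₂| / C ≤ σ₂ ^ 2) :
    (1 / 2) * erfc (Real.sqrt (C / 2)) ≤ (P {ω | θ₁ ω ≤ θ₂ ω}).toReal := by
  have hneg : Measure.map (fun ω => - θ₁ ω) P = gaussianReal (-μ₁) v₁ := by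
    rw [← gaussianReal_map_neg, ← hlaw₁, Measure.map_map (by fun_prop) hθ₁]
    rfl
  have hind : IndepFun θ₂ (fun ω => - θ₁ ω) P :=
    hindep.symm.comp (φ := id) (ψ := fun x : ℝ => -x) measurable_id measurable_neg
  have hD := gaussianReal_add_gaussianReal_of_indepFun hind hlaw₂ hneg
  set v : NNReal := (σ₂ ^ 2).toNNReal + v₁ with hv
  have hvr : (v : ℝ) = σ₂ ^ 2 + v₁ := by
    rw [hv, NNReal.coe_add, Real.coe_toNNReal _ (sq_nonneg _)]
  have hv1 : (0 : ℝ) ≤ v₁ := v₁.2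
  have hvpos : (0 : ℝ) < v := by rw [hvr]; positivity
  have hmap : gaussianReal (μ₂ + -μ₁) v
      = (gaussianReal 0 (1 / 2)).map (fun u => Real.sqrt (2 * v) * u + (μ₂ + -μ₁)) := by
    have h1 : (fun u => Real.sqrt (2 * v) * u + (μ₂ + -μ₁))
      = (fun u => u + (μ₂ + -μ₁)) ∘ (fun u => Real.sqrt (2 * v) * u) := rfl
    rw [h1, ← Measure.map_map (by fun_prop) (by fun_prop), gaussianReal_map_const_mul,
      gaussianReal_map_add_const]
    congr 1
    · simp
    · apply NNReal.eq
      simp only [NNReal.coe_mul, NNReal.coe_mk]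
      rw [Real.sq_sqrt (by positivity)]
      simp
      ring
  have hev : P {ω | θ₁ ω ≤ θ₂ ω} = gaussianReal 0 (1 / 2)
      {u | 0 ≤ Real.sqrt (2 * v) * u + (μ₂ + -μ₁)} := by
    have h2 : {u : ℝ | 0 ≤ Real.sqrt (2 * v) * u + (μ₂ + -μ₁)}
      = (fun u => Real.sqrt (2 * v) * u + (μ₂ + -μ₁)) ⁻¹' Set.Ici 0 := rfl
    rw [h2, ← Measure.map_apply (by fun_prop) measurableSet_Ici, ← hmap, ← hD,
      Measure.map_apply (by fun_prop) measurableSet_Ici]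
    congr 1
    ext ω
    simp
  have hsub : Set.Ioi (Real.sqrt (C / 2)) ⊆
      {u : ℝ | 0 ≤ Real.sqrt (2 * v) * u + (μ₂ + -μ₁)} := by
    intro u hu
    have hu' : Real.sqrt (C / 2) < u := hu
    have h3 : μ₁ - μ₂ ≤ Real.sqrt (2 * v) * Real.sqrt (C / 2) := by
      rw [← Real.sqrt_mul (by positivity)]
      apply Real.le_sqrt_of_sq_le
      rw [div_le_iff₀ hC] at hfloor
      have h4 : |μ₁ - μ₂| ≤ 1 := by rw [abs_le]; constructor <;> linarith
      have h5 : (μ₁ - μ₂) ^ 2 ≤ |μ₁ - μ₂| := by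
        rw [← sq_abs]; nlinarith [abs_nonneg (μ₁ - μ₂)]
      rw [hvr]
      nlinarith [mul_nonneg hv1 hC.le]
    have h6 := mul_le_mul_of_nonneg_left hu'.le (Real.sqrt_nonneg (2 * v))
    show 0 ≤ Real.sqrt (2 * v) * u + (μ₂ + -μ₁)
    linarith
  have herf : (1 / 2) * erfc (Real.sqrt (C / 2))
      = (gaussianReal 0 (1 / 2) (Set.Ioi (Real.sqrt (C / 2)))).toReal := by
    rw [gaussianReal_apply_eq_integral _ (by norm_num), ENNReal.toReal_ofReal
      (integral_nonneg fun x => gaussianPDFReal_nonneg _ _ _), erfc, ← mul_assoc,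
      ← integral_const_mul]
    congr 1
    ext u
    rw [gaussianPDFReal]
    congr 1
    · simp
      have h7 : Real.sqrt 2 ≠ 0 := by positivity
      field_simp
    · simp
  rw [herf, hev]
  exact ENNReal.toReal_mono (measure_ne_top _ _) (measure_mono hsub)
end

section
/- Let n ≥ 1 be an integer, let a₁, …, a_n be reals, and for each j let (μ_j(t)) and (σ_j(t)) be sequences with σ_j(t) ≥ 0, μ_j(t) → a_j and σ_j(t) → 0 as t → ∞ (with the relevant combined variances positive for every t). Define recursively the nested Clark approximation: (m_n(t), v_n(t)) = (μ_n(t), σ_n(t)²), and for j = n−1 down to 1, letting s = √(σ_j(t)² + v_{j+1}(t)) and α = (μ_j(t) − m_{j+1}(t))/s, set m_j(t) = μ_j(t)Φ(α) + m_{j+1}(t)Φ(−α) + sφ(α) and v_j(t) = (μ_j(t)² + σ_j(t)²)Φ(α) + (m_{j+1}(t)² + v_{j+1}(t))Φ(−α) + (μ_j(t) + m_{j+1}(t))sφ(α) − m_j(t)². Then m_1(t) → max(a₁, …, a_n) and v_1(t) → 0 as t → ∞. -/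
open MeasureTheory ProbabilityTheory Filter

/-- One step of Clark's moment-matching approximation: given (mean, variance) pairs
`p` and `q` of two independent Gaussians, return the (mean, variance) pair of (the Gaussian
approximation of) their maximum. -/
noncomputable def clarkStep (p q : ℝ × ℝ) : ℝ × ℝ :=
  let s := Real.sqrt (p.2 + q.2)
  let α := (p.1 - q.1) / s
  let m := p.1 * stdGaussianCDF α + q.1 * stdGaussianCDF (-α) + s * stdGaussianPDF α
  (m, (p.1 ^ 2 + p.2) * stdGaussianCDF α + (q.1 ^ 2 + q.2) * stdGaussianCDF (-α)
        + (p.1 + q.1) * s * stdGaussianPDF α - m ^ 2)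

/-- The nested (right-to-left) pairwise Clark approximation of the maximum of a list of
Gaussian (mean, variance) pairs: `(m_n, v_n)` is the last pair, and
`(m_j, v_j) = clarkStep (μ_j, σ_j²) (m_{j+1}, v_{j+1})`. -/
noncomputable def clarkFold : List (ℝ × ℝ) → ℝ × ℝ
  | [] => (0, 0)
  | [x] => x
  | x :: y :: xs => clarkStep x (clarkFold (y :: xs))


lemma Phi_eq_cdf : stdGaussianCDF = fun x => cdf (gaussianReal 0 1) x := by
  funext x
  rw [cdf_eq_real]; rfl

lemma Phi_nonneg (x : ℝ) : 0 ≤ stdGaussianCDF x := ENNReal.toReal_nonneg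

lemma Phi_le_one (x : ℝ) : stdGaussianCDF x ≤ 1 := by
  rw [Phi_eq_cdf]; exact cdf_le_one _ _

lemma Phi_neg (x : ℝ) : stdGaussianCDF (-x) = 1 - stdGaussianCDF x := by
  have hna : NullSingletonClass (gaussianReal 0 1) := nullSingletonClass_gaussianReal (by norm_num)
  have h : gaussianReal 0 1 (Set.Iic (-x)) = gaussianReal 0 1 (Set.Ici x) := by
    have h1 : (gaussianReal 0 1).map (fun y => -y) = gaussianReal 0 1 := by
      rw [gaussianReal_map_neg]; simp
    conv_lhs => rw [← h1]
    rw [Measure.map_apply measurable_neg measurableSet_Iic]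
    congr 1
    ext y; simp
  have h2 : gaussianReal 0 1 (Set.Ici x) = gaussianReal 0 1 (Set.Iic x)ᶜ := by
    rw [Set.compl_Iic]; exact (measure_congr Ioi_ae_eq_Ici).symm
  unfold stdGaussianCDF
  rw [h, h2]
  exact probReal_compl_eq_one_sub (μ := gaussianReal 0 1) measurableSet_Iic

lemma Phi_top : Tendsto stdGaussianCDF atTop (nhds 1) := by
  rw [Phi_eq_cdf]; exact tendsto_cdf_atTop _

lemma Phi_bot : Tendsto stdGaussianCDF atBot (nhds 0) := by
  rw [Phi_eq_cdf]; exact tendsto_cdf_atBot _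

lemma phi_bound (x : ℝ) : |stdGaussianPDF x| ≤ 1 / Real.sqrt (2 * Real.pi) := by
  unfold stdGaussianPDF
  rw [abs_of_nonneg (by positivity)]
  gcongr
  rw [Real.exp_le_one_iff]
  nlinarith [sq_nonneg x]

lemma mix_tendsto {A B F G : ℝ} {p q s f g : ℕ → ℝ}
    (hp : Tendsto p atTop (nhds A)) (hq : Tendsto q atTop (nhds B))
    (hs : Tendsto s atTop (nhds 0)) (hs0 : ∀ t, 0 < s t)
    (hf : Tendsto f atTop (nhds F)) (hg : Tendsto g atTop (nhds G))
    (hFG : A = B → F = G) :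
    Tendsto (fun t => f t * stdGaussianCDF ((p t - q t) / s t)
      + g t * stdGaussianCDF (-((p t - q t) / s t))) atTop (nhds (if B ≤ A then F else G)) := by
  have hinv : Tendsto (fun t => (s t)⁻¹) atTop atTop :=
    tendsto_inv_nhdsGT_zero.comp
      (tendsto_nhdsWithin_iff.2 ⟨hs, Eventually.of_forall fun t => hs0 t⟩)
  have hd : Tendsto (fun t => p t - q t) atTop (nhds (A - B)) := hp.sub hq
  simp only [Phi_neg]
  rcases lt_trichotomy A B with h | h | h
  · rw [if_neg (not_le.2 h)]
    have hα : Tendsto (fun t => (p t - q t) / s t) atTop atBot := by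
      simp only [div_eq_mul_inv]
      exact hd.neg_mul_atTop (by linarith) hinv
    have := Phi_bot.comp hα
    simpa using (hf.mul this).add (hg.mul (this.const_sub 1))
  · rw [if_pos h.ge]
    have hFG := hFG h
    subst hFG
    have h0 : Tendsto (fun t => (f t - g t) * stdGaussianCDF ((p t - q t) / s t)) atTop (nhds 0) := by
      refine squeeze_zero_norm (a := fun t => |f t - g t|) (fun t => ?_) ?_
      · rw [norm_mul, Real.norm_eq_abs, Real.norm_eq_abs, abs_of_nonneg (Phi_nonneg _)]
        exact mul_le_of_le_one_right (abs_nonneg _) (Phi_le_one _)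
      · simpa using (hf.sub hg).abs
    have := h0.add hg
    rw [zero_add] at this
    refine this.congr fun t => by ring
  · rw [if_pos h.le]
    have hα : Tendsto (fun t => (p t - q t) / s t) atTop atTop := by
      simp only [div_eq_mul_inv]
      exact hd.pos_mul_atTop (by linarith) hinv
    have := Phi_top.comp hα
    simpa using (hf.mul this).add (hg.mul (this.const_sub 1))

lemma clarkStep_tendsto {A B : ℝ} {p q : ℕ → ℝ × ℝ}
    (hp : Tendsto (fun t => (p t).1) atTop (nhds A)) (hq : Tendsto (fun t => (q t).1) atTop (nhds B))
    (hp2 : Tendsto (fun t => (p t).2) atTop (nhds 0))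
    (hq2 : Tendsto (fun t => (q t).2) atTop (nhds 0))
    (hpos : ∀ t, 0 < (p t).2 + (q t).2) :
    Tendsto (fun t => (clarkStep (p t) (q t)).1) atTop (nhds (max A B)) ∧
    Tendsto (fun t => (clarkStep (p t) (q t)).2) atTop (nhds 0) := by
  have hs : Tendsto (fun t => Real.sqrt ((p t).2 + (q t).2)) atTop (nhds 0) := by
    simpa using (hp2.add hq2).sqrt
  have hs0 : ∀ t, 0 < Real.sqrt ((p t).2 + (q t).2) := fun t => Real.sqrt_pos.2 (hpos t)
  have hφ : Tendsto (fun t => Real.sqrt ((p t).2 + (q t).2) *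
      stdGaussianPDF (((p t).1 - (q t).1) / Real.sqrt ((p t).2 + (q t).2))) atTop (nhds 0) := by
    refine squeeze_zero_norm
      (a := fun t => Real.sqrt ((p t).2 + (q t).2) * (1 / Real.sqrt (2 * Real.pi))) (fun t => ?_) ?_
    · rw [norm_mul, Real.norm_eq_abs, Real.norm_eq_abs, abs_of_pos (hs0 t)]
      exact mul_le_mul_of_nonneg_left (phi_bound _) (hs0 t).le
    · simpa using hs.mul_const (1 / Real.sqrt (2 * Real.pi))
  have h1 := (mix_tendsto hp hq hs hs0 hp hq id).add hφ
  have h2 := (mix_tendsto hp hq hs hs0 ((hp.pow 2).add hp2) ((hq.pow 2).add hq2)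
    (fun h => by rw [h])).add ((hp.add hq).mul hφ)
  have e : (if B ≤ A then A else B) + 0 = max A B := by
    split_ifs with h
    · simp [h]
    · simp [(not_le.1 h).le]
  rw [e] at h1
  refine ⟨h1, ?_⟩
  have h3 := h2.sub (h1.pow 2)
  have e2 : (if B ≤ A then A ^ 2 + 0 else B ^ 2 + 0) + (A + B) * 0 - max A B ^ 2 = 0 := by
    rw [← e]; split_ifs <;> ring
  rw [e2] at h3
  refine h3.congr fun t => ?_
  simp only [clarkStep]
  ring

lemma fold_tendsto (n : ℕ) : ∀ (a : ℕ → ℝ) (μ σ : ℕ → ℕ → ℝ)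
    (_ : ∀ j, j < n + 1 → Tendsto (fun t => μ j t) atTop (nhds (a j)))
    (_ : ∀ j, j < n + 1 → Tendsto (fun t => σ j t) atTop (nhds 0))
    (_ : ∀ t : ℕ, ∀ j : ℕ, j + 1 < n + 1 →
      0 < (σ j t) ^ 2 +
        (clarkFold ((List.ofFn (fun i : Fin (n + 1) => (μ (i : ℕ) t, (σ (i : ℕ) t) ^ 2))).drop
          (j + 1))).2),
    Tendsto
        (fun t => (clarkFold (List.ofFn (fun i : Fin (n + 1) => (μ (i : ℕ) t, (σ (i : ℕ) t) ^ 2)))).1)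
        atTop
        (nhds ((Finset.range (n + 1)).sup' Finset.nonempty_range_add_one a)) ∧
    Tendsto
        (fun t => (clarkFold (List.ofFn (fun i : Fin (n + 1) => (μ (i : ℕ) t, (σ (i : ℕ) t) ^ 2)))).2)
        atTop (nhds 0) := by
  induction n with
  | zero =>
    intro a μ σ hμ hσ _
    have h2 := (hσ 0 (by norm_num)).pow 2
    simp only [ne_eq, OfNat.ofNat_ne_zero, not_false_eq_true, zero_pow] at h2
    simpa [List.ofFn_succ, clarkFold] using ⟨hμ 0 (by norm_num), h2⟩
  | succ n ih =>
    intro a μ σ hμ hσ hpos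
    have key : ∀ t, List.ofFn (fun i : Fin (n + 1 + 1) => (μ (i : ℕ) t, (σ (i : ℕ) t) ^ 2)) =
        (μ 0 t, σ 0 t ^ 2) ::
          List.ofFn (fun i : Fin (n + 1) => (μ ((i : ℕ) + 1) t, (σ ((i : ℕ) + 1) t) ^ 2)) := by
      intro t; rw [List.ofFn_succ]; simp
    have key2 : ∀ t, clarkFold
        (List.ofFn (fun i : Fin (n + 1 + 1) => (μ (i : ℕ) t, (σ (i : ℕ) t) ^ 2))) =
        clarkStep (μ 0 t, σ 0 t ^ 2) (clarkFold
          (List.ofFn (fun i : Fin (n + 1) => (μ ((i : ℕ) + 1) t, (σ ((i : ℕ) + 1) t) ^ 2)))) := by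
      intro t; rw [key, List.ofFn_succ]; rfl
    obtain ⟨i1, i2⟩ := ih (fun j => a (j + 1)) (fun j => μ (j + 1)) (fun j => σ (j + 1))
      (fun j hj => hμ (j + 1) (by omega)) (fun j hj => hσ (j + 1) (by omega))
      (fun t j hj => by
        have := hpos t (j + 1) (by omega)
        rw [key, List.drop_succ_cons] at this
        exact this)
    have hmax : (Finset.range (n + 1 + 1)).sup' Finset.nonempty_range_add_one a =
        max (a 0) ((Finset.range (n + 1)).sup' Finset.nonempty_range_add_one
          (fun j => a (j + 1))) := by
      apply le_antisymm
      · refine Finset.sup'_le _ _ fun j hj => ?_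
        rw [Finset.mem_range] at hj
        rcases j with _ | j
        · exact le_max_left _ _
        · exact le_max_of_le_right (Finset.le_sup' (fun j => a (j + 1))
            (Finset.mem_range.2 (by omega : j < n + 1)))
      · refine max_le (Finset.le_sup' a (by simp)) (Finset.sup'_le _ _ fun j hj => ?_)
        rw [Finset.mem_range] at hj
        exact Finset.le_sup' a (Finset.mem_range.2 (by omega : j + 1 < n + 1 + 1))
    rw [hmax]
    simp only [key2]
    have h2 := (hσ 0 (by omega)).pow 2
    simp only [ne_eq, OfNat.ofNat_ne_zero, not_false_eq_true, zero_pow] at h2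
    refine clarkStep_tendsto (p := fun t => (μ 0 t, σ 0 t ^ 2)) (hμ 0 (by omega)) i1 h2 i2
      fun t => ?_
    have := hpos t 0 (by omega)
    rw [key, List.drop_succ_cons, List.drop_zero] at this
    exact this

/-- Inductive step of Lemma 4: if `μ_j(t) → a_j` and `σ_j(t) → 0` (with the combined
variances appearing in the recursion positive for every `t`), then the nested Clark
approximation `(m_1(t), v_1(t))` of the maximum of the `n` Gaussians satisfies
`m_1(t) → max_j a_j` and `v_1(t) → 0`. -/
theorem stmt17 (n : ℕ) (hn : 1 ≤ n)
    (a : ℕ → ℝ) (μ σ : ℕ → ℕ → ℝ)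
    (hσnonneg : ∀ j, j < n → ∀ t, 0 ≤ σ j t)
    (hμ : ∀ j, j < n → Tendsto (fun t => μ j t) atTop (nhds (a j)))
    (hσ : ∀ j, j < n → Tendsto (fun t => σ j t) atTop (nhds 0))
    (hpos : ∀ t : ℕ, ∀ j : ℕ, j + 1 < n →
      0 < (σ j t) ^ 2 +
        (clarkFold ((List.ofFn (fun i : Fin n => (μ (i : ℕ) t, (σ (i : ℕ) t) ^ 2))).drop
          (j + 1))).2) :
    Tendsto
        (fun t => (clarkFold (List.ofFn (fun i : Fin n => (μ (i : ℕ) t, (σ (i : ℕ) t) ^ 2)))).1)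
        atTop
        (nhds ((Finset.range n).sup'
          (Finset.nonempty_range_iff.mpr (Nat.one_le_iff_ne_zero.mp hn)) a)) ∧
    Tendsto
        (fun t => (clarkFold (List.ofFn (fun i : Fin n => (μ (i : ℕ) t, (σ (i : ℕ) t) ^ 2)))).2)
        atTop (nhds 0) := by
  obtain ⟨k, rfl⟩ : ∃ k, n = k + 1 := ⟨n - 1, by omega⟩
  exact fold_tendsto k a μ σ hμ hσ hpos
end
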